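/- Let n > k ≥ 1 be integers and let M > 0 be such that L_g ≤ M for every function g ∈ Q₀^{n−k}. Then for every log-concave upper semicontinuous probability density f : ℝⁿ → [0,∞) in isotropic position and every k-dimensional linear subspace H ⊆ ℝⁿ, one has ∫_H f dλ_H ≤ M^{n−k}. -/

import Mathlib

open MeasureTheory

noncomputable section

/-- `ℝⁿ` with its Euclidean structure. -/
abbrev Eucl (n : ℕ) := EuclideanSpace ℝ (Fin n)

/-- `f : ℝⁿ → [0,∞)` is log-concave:
`f(tx+(1−t)y) ≥ f(x)^t · f(y)^(1−t)` for all `x, y` and `t ∈ (0,1)`. -/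
def IsLogConcave {n : ℕ} (f : Eucl n → ℝ) : Prop :=
  ∀ x y : Eucl n, ∀ t : ℝ, 0 < t → t < 1 →
    f x ^ t * f y ^ (1 - t) ≤ f (t • x + (1 - t) • y)

/-- The class `Q₀ⁿ`: nonnegative, log-concave, upper semicontinuous, integrable
functions with positive integral. -/
def MemQ0 {n : ℕ} (f : Eucl n → ℝ) : Prop :=
  (∀ x, 0 ≤ f x) ∧ IsLogConcave f ∧ UpperSemicontinuous f ∧
    Integrable f ∧ 0 < ∫ x, f x

/-- `‖f‖_∞ = sup f`. -/
def supNorm {n : ℕ} (f : Eucl n → ℝ) : ℝ := ⨆ x, f x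

/-- `‖f‖_p = (∫ f^p)^(1/p)`. -/
def lpNorm {n : ℕ} (p : ℝ) (f : Eucl n → ℝ) : ℝ := (∫ x, f x ^ p) ^ (1 / p)

/-- `‖P_H f‖_{L¹(H)} = ∫_H sup_{z ∈ H⊥} f(y+z) dλ_H(y)`, the `L¹(H)`-norm of the
projection of `f` onto the subspace `H` (with the Lebesgue measure on `H` induced
by the Euclidean structure). -/
def projL1 {n : ℕ} (f : Eucl n → ℝ) (H : Submodule ℝ (Eucl n)) : ℝ :=
  ∫ y : H, ⨆ z : Hᗮ, f ((y : Eucl n) + (z : Eucl n))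

/-- `‖S_H f‖_{L¹(H)} = ∫_H f dλ_H`, the integral of the section `f|_H`. -/
def sectL1 {n : ℕ} (f : Eucl n → ℝ) (H : Submodule ℝ (Eucl n)) : ℝ :=
  ∫ y : H, f (y : Eucl n)

/-- The covariance matrix of the probability measure `‖g‖₁⁻¹ g(x) dx`:
`Cov(g)_{ij} = ‖g‖₁⁻¹ ∫ xᵢxⱼ g − bᵢbⱼ` with barycenter `b = ‖g‖₁⁻¹ ∫ x g(x) dx`. -/
def covMatrix {d : ℕ} (g : Eucl d → ℝ) : Matrix (Fin d) (Fin d) ℝ :=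
  Matrix.of fun i j =>
    (∫ x, g x * x i * x j) / (∫ x, g x) -
      ((∫ x, g x * x i) / ∫ x, g x) * ((∫ x, g x * x j) / ∫ x, g x)

/-- The isotropic constant `L_g = (‖g‖_∞/‖g‖₁)^{1/d} · (det Cov(g))^{1/(2d)}`. -/
def isoConst {d : ℕ} (g : Eucl d → ℝ) : ℝ :=
  (supNorm g / ∫ x, g x) ^ ((1 : ℝ) / d) *
    (covMatrix g).det ^ (1 / (2 * (d : ℝ)))

section Helpers

open scoped Pointwise

structure KLC {E : Type*} [NormedAddCommGroup E] [NormedSpace ℝ E] (f : E → ℝ) : Prop where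
  nonneg : ∀ x, 0 ≤ f x
  lc : ∀ x y : E, ∀ t : ℝ, 0 < t → t < 1 → f x ^ t * f y ^ (1 - t) ≤ f (t • x + (1 - t) • y)
  usc : UpperSemicontinuous f
  supp : ∃ K : Set E, IsCompact K ∧ ∀ x, x ∉ K → f x = 0

section KLCbasic

variable {E : Type*} [NormedAddCommGroup E] [NormedSpace ℝ E] {f : E → ℝ}

theorem KLC.bdd (h : KLC f) : ∃ C : ℝ, 0 ≤ C ∧ ∀ x, f x ≤ C := by
  obtain ⟨K, hK, hK0⟩ := h.supp
  obtain ⟨C, hC⟩ := (h.usc.upperSemicontinuousOn K).bddAbove_of_isCompact hK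
  refine ⟨max C 0, le_max_right _ _, fun x => ?_⟩
  by_cases hx : x ∈ K
  · exact (hC ⟨x, hx, rfl⟩).trans (le_max_left _ _)
  · rw [hK0 x hx]; exact le_max_right _ _

theorem KLC.level (h : KLC f) {s : ℝ} (hs : 0 < s) : IsCompact {x | s ≤ f x} := by
  obtain ⟨K, hK, hK0⟩ := h.supp
  refine hK.of_isClosed_subset (h.usc.isClosed_preimage s) fun x hx => ?_
  by_contra hxK
  have : s ≤ f x := hx
  rw [hK0 x hxK] at this
  linarith

theorem KLC.max (h : KLC f) (hne : ∃ x, f x ≠ 0) : ∃ x0, 0 < f x0 ∧ ∀ x, f x ≤ f x0 := by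
  obtain ⟨x, hx⟩ := hne
  have hx' : 0 < f x := lt_of_le_of_ne (h.nonneg x) (Ne.symm hx)
  obtain ⟨x0, hx0, hm⟩ := UpperSemicontinuousOn.exists_isMaxOn (s := {y | f x ≤ f y}) ⟨x, le_refl (f x)⟩
    (h.level hx') (h.usc.upperSemicontinuousOn _)
  refine ⟨x0, hx'.trans_le hx0, fun y => ?_⟩
  by_cases hy : f x ≤ f y
  · exact hm hy
  · exact (not_le.1 hy).le.trans hx0

theorem KLC.integrable [MeasurableSpace E] [BorelSpace E] (μ : Measure E)
    [IsFiniteMeasureOnCompacts μ] (h : KLC f) : Integrable f μ := by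
  obtain ⟨K, hK, hK0⟩ := h.supp
  obtain ⟨C, hC0, hC⟩ := h.bdd
  have hm : Measurable f := h.usc.measurable
  have h1 : IntegrableOn f K μ :=
    Measure.integrableOn_of_bounded hK.measure_lt_top.ne hm.aestronglyMeasurable (M := C)
      (Filter.Eventually.of_forall fun x => by
        rw [Real.norm_of_nonneg (h.nonneg x)]; exact hC x)
  exact h1.integrable_of_forall_notMem_eq_zero hK0

end KLCbasic

theorem bm_one {A B : Set ℝ} (hA : IsCompact A) (hB : IsCompact B) (hA' : A.Nonempty)
    (hB' : B.Nonempty) : volume A + volume B ≤ volume (A + B) := by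
  obtain ⟨a, ha, ha'⟩ := hA.exists_isGreatest hA'
  obtain ⟨b, hb, hb'⟩ := hB.exists_isLeast hB'
  have h1 : volume ((fun x => x + b) '' A) = volume A := by simp
  have h2 : volume ((fun x => a + x) '' B) = volume B := by simp
  have hc2 : MeasurableSet ((fun x => a + x) '' B) :=
    (hB.image (by fun_prop)).measurableSet
  rw [← h1, ← h2, ← measure_union₀ hc2.nullMeasurableSet]
  · apply measure_mono
    rintro _ (⟨x, hx, rfl⟩ | ⟨x, hx, rfl⟩)
    · exact Set.add_mem_add hx hb
    · exact Set.add_mem_add ha hx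
  · refine measure_mono_null (t := {a + b}) ?_ (by simp)
    rintro z ⟨⟨x, hx, rfl⟩, ⟨y, hy, hxy⟩⟩
    have := ha' hx
    have := hb' hy
    simp only [Set.mem_singleton_iff]
    simp only at hxy
    linarith

theorem pl_one {u v w : ℝ → ℝ} (hu : KLC u) (hv : KLC v) (hw : KLC w) {t : ℝ} (ht0 : 0 < t)
    (ht1 : t < 1) (H : ∀ x y, u x ^ t * v y ^ (1 - t) ≤ w (t * x + (1 - t) * y)) :
    (∫ x, u x) ^ t * (∫ x, v x) ^ (1 - t) ≤ ∫ x, w x := by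
  have ht1' : 0 < 1 - t := by linarith
  have hw0 : 0 ≤ ∫ x, w x := integral_nonneg hw.nonneg
  by_cases hu0 : ∃ x, u x ≠ 0
  swap
  · push Not at hu0
    simp only [hu0, integral_zero, Real.zero_rpow ht0.ne', zero_mul]
    exact hw0
  by_cases hv0 : ∃ x, v x ≠ 0
  swap
  · push Not at hv0
    simp only [hv0, integral_zero, Real.zero_rpow ht1'.ne', mul_zero]
    exact hw0
  obtain ⟨x0, hU, hUm⟩ := hu.max hu0
  obtain ⟨y0, hV, hVm⟩ := hv.max hv0
  set U := u x0
  set V := v y0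
  set W := U ^ t * V ^ (1 - t) with hWdef
  have hW : 0 < W := by positivity
  have key : ∀ s : ℝ, 0 < s → ENNReal.ofReal t * volume {x | s ≤ u x / U} +
      ENNReal.ofReal (1 - t) * volume {x | s ≤ v x / V} ≤ volume {x | s ≤ w x / W} := by
    intro s hs
    have eU : {x | s ≤ u x / U} = {x | s * U ≤ u x} := by
      ext x; simp only [Set.mem_ofPred_eq, le_div_iff₀ hU]
    have eV : {x | s ≤ v x / V} = {x | s * V ≤ v x} := by
      ext x; simp only [Set.mem_ofPred_eq, le_div_iff₀ hV]
    rcases le_or_gt s 1 with hs1 | hs1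
    · have cU : IsCompact {x | s ≤ u x / U} := by rw [eU]; exact hu.level (by positivity)
      have cV : IsCompact {x | s ≤ v x / V} := by rw [eV]; exact hv.level (by positivity)
      have nU : ({x | s ≤ u x / U}).Nonempty := ⟨x0, by
        show s ≤ U / U
        rw [div_self hU.ne']; exact hs1⟩
      have nV : ({x | s ≤ v x / V}).Nonempty := ⟨y0, by
        show s ≤ V / V
        rw [div_self hV.ne']; exact hs1⟩
      have b := bm_one (cU.smul t) (cV.smul (1 - t)) nU.smul_set nV.smul_set
      rw [Measure.addHaar_smul, Measure.addHaar_smul] at b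
      simp only [Module.finrank_self, pow_one, abs_of_pos ht0, abs_of_pos ht1'] at b
      refine b.trans (measure_mono ?_)
      rintro _ ⟨_, ⟨x, hx, rfl⟩, _, ⟨y, hy, rfl⟩, rfl⟩
      rw [eU] at hx
      rw [eV] at hy
      simp only [Set.mem_ofPred_eq, smul_eq_mul] at hx hy ⊢
      rw [le_div_iff₀ hW]
      refine le_trans ?_ (H x y)
      calc s * W = (s * U) ^ t * (s * V) ^ (1 - t) := by
            rw [Real.mul_rpow hs.le hU.le, Real.mul_rpow hs.le hV.le, hWdef]
            have : s = s ^ t * s ^ (1 - t) := by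
              rw [← Real.rpow_add hs]; simp
            calc s * (U ^ t * V ^ (1 - t)) = (s ^ t * s ^ (1 - t)) * (U ^ t * V ^ (1 - t)) := by
                  rw [← this]
              _ = _ := by ring
        _ ≤ _ := by
            gcongr
            exact Real.rpow_nonneg (hu.nonneg x) _
    · have e1 : {x | s ≤ u x / U} = ∅ := by
        ext x
        simp only [Set.mem_ofPred_eq, Set.mem_empty_iff_false, iff_false, not_le]
        exact lt_of_le_of_lt ((div_le_one hU).2 (hUm x)) hs1
      have e2 : {x | s ≤ v x / V} = ∅ := by
        ext x
        simp only [Set.mem_ofPred_eq, Set.mem_empty_iff_false, iff_false, not_le]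
        exact lt_of_le_of_lt ((div_le_one hV).2 (hVm x)) hs1
      simp [e1, e2]
  have lay : ∀ (g : ℝ → ℝ) (G : ℝ), KLC g → 0 < G →
      ENNReal.ofReal (∫ x, g x / G) = ∫⁻ s in Set.Ioi 0, volume {x | s ≤ g x / G} := by
    intro g G hg hG
    have nn : ∀ x, 0 ≤ g x / G := fun x => div_nonneg (hg.nonneg x) hG.le
    rw [ofReal_integral_eq_lintegral_ofReal ((hg.integrable volume).div_const G)
      (Filter.Eventually.of_forall nn)]
    exact lintegral_eq_lintegral_meas_le volume (Filter.Eventually.of_forall nn)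
      (hg.usc.measurable.div_const G).aemeasurable
  have iU : 0 ≤ ∫ x, u x / U := integral_nonneg fun x => div_nonneg (hu.nonneg x) hU.le
  have iV : 0 ≤ ∫ x, v x / V := integral_nonneg fun x => div_nonneg (hv.nonneg x) hV.le
  have iW : 0 ≤ ∫ x, w x / W := integral_nonneg fun x => div_nonneg (hw.nonneg x) hW.le
  have main : t * (∫ x, u x / U) + (1 - t) * (∫ x, v x / V) ≤ ∫ x, w x / W := by
    rw [← ENNReal.ofReal_le_ofReal_iff iW, ENNReal.ofReal_add (by positivity) (by positivity),
      ENNReal.ofReal_mul ht0.le, ENNReal.ofReal_mul ht1'.le, lay u U hu hU, lay v V hv hV,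
      lay w W hw hW, ← lintegral_const_mul' _ _ ENNReal.ofReal_ne_top,
      ← lintegral_const_mul' _ _ ENNReal.ofReal_ne_top]
    refine (le_lintegral_add _ _).trans ?_
    refine setLIntegral_mono' measurableSet_Ioi fun s hs => key s hs
  have amgm := Real.geom_mean_le_arith_mean2_weighted ht0.le ht1'.le iU iV (by ring)
  have fin := amgm.trans main
  rw [integral_div, integral_div, integral_div, le_div_iff₀ hW] at fin
  rw [Real.div_rpow (integral_nonneg hu.nonneg) hU.le,
    Real.div_rpow (integral_nonneg hv.nonneg) hV.le, hWdef] at fin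
  refine le_trans (le_of_eq ?_) fin
  have : U ^ t ≠ 0 := by positivity
  have : V ^ (1 - t) ≠ 0 := by positivity
  field_simp

section Marginals

theorem KLC.comp {E E' : Type*} [NormedAddCommGroup E] [NormedSpace ℝ E]
    [NormedAddCommGroup E'] [NormedSpace ℝ E'] {f : E → ℝ} (h : KLC f) (L : E' → E)
    (hL : Continuous L) (hlin : ∀ x y : E', ∀ t : ℝ,
      L (t • x + (1 - t) • y) = t • L x + (1 - t) • L y)
    (S : E → E') (hS : Continuous S) (hSL : ∀ x, S (L x) = x) : KLC (fun x => f (L x)) where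
  nonneg x := h.nonneg _
  lc x y t h0 h1 := by
    rw [hlin]
    exact h.lc _ _ t h0 h1
  usc := h.usc.comp hL
  supp := by
    obtain ⟨K, hK, hK0⟩ := h.supp
    exact ⟨S '' K, hK.image hS, fun x hx => hK0 _ fun hx' => hx ⟨_, hx', hSL x⟩⟩

theorem affine_slice {E E' : Type*} [NormedAddCommGroup E] [NormedSpace ℝ E]
    [NormedAddCommGroup E'] [NormedSpace ℝ E'] (x : E) (y z : E') (t : ℝ) :
    ((x, t • y + (1 - t) • z) : E × E') = t • (x, y) + (1 - t) • (x, z) := by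
  ext
  · simp [← add_smul]
  · simp

theorem KLC.slice {E E' : Type*} [NormedAddCommGroup E] [NormedSpace ℝ E]
    [NormedAddCommGroup E'] [NormedSpace ℝ E'] {F : E × E' → ℝ} (h : KLC F) (x : E) :
    KLC (fun s => F (x, s)) :=
  h.comp (fun s => (x, s)) (by fun_prop) (fun y z t => affine_slice x y z t) Prod.snd
    continuous_snd (fun _ => rfl)

theorem KLC.marg_one {E : Type*} [NormedAddCommGroup E] [NormedSpace ℝ E]
    {F : E × ℝ → ℝ} (h : KLC F) : KLC (fun x => ∫ s, F (x, s)) where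
  nonneg x := integral_nonneg fun s => h.nonneg _
  lc x y t h0 h1 := by
    refine pl_one (h.slice x) (h.slice y) (h.slice _) h0 h1 fun a b => ?_
    exact h.lc (x, a) (y, b) t h0 h1
  supp := by
    obtain ⟨K, hK, hK0⟩ := h.supp
    refine ⟨Prod.fst '' K, hK.image continuous_fst, fun x hx => ?_⟩
    have : ∀ s, F (x, s) = 0 := fun s => hK0 _ fun hxs => hx ⟨_, hxs, rfl⟩
    simp [this]
  usc := by
    obtain ⟨K, hK, hK0⟩ := h.supp
    obtain ⟨C, hC0, hC⟩ := h.bdd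
    intro x0 y hy
    by_contra hcon
    rw [Filter.not_eventually] at hcon
    obtain ⟨u, hu, hu'⟩ := Filter.exists_seq_forall_of_frequently hcon
    simp only [not_lt] at hu'
    have hy0 : 0 < y := lt_of_le_of_lt (integral_nonneg fun s => h.nonneg _) hy
    have hK2 : IsCompact (Prod.snd '' K) := hK.image continuous_snd
    have e : ∀ x, ENNReal.ofReal (∫ s, F (x, s)) = ∫⁻ s, ENNReal.ofReal (F (x, s)) := fun x =>
      ofReal_integral_eq_lintegral_ofReal ((h.slice x).integrable volume)
        (Filter.Eventually.of_forall fun s => h.nonneg _)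
    have l := limsup_lintegral_le (μ := (volume : Measure ℝ))
      (f := fun n s => ENNReal.ofReal (F (u n, s)))
      ((Prod.snd '' K).indicator fun _ => ENNReal.ofReal C)
      (fun n => (h.slice (u n)).usc.measurable.ennreal_ofReal)
      (fun n => Filter.Eventually.of_forall fun s => by
        by_cases hs : s ∈ Prod.snd '' K
        · simp only [Set.indicator_of_mem hs]
          exact ENNReal.ofReal_le_ofReal (hC _)
        · have : F (u n, s) = 0 := hK0 _ fun hxs => hs ⟨_, hxs, rfl⟩
          simp [this])
      (by
        rw [lintegral_indicator hK2.measurableSet, setLIntegral_const]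
        exact ENNReal.mul_ne_top ENNReal.ofReal_ne_top hK2.measure_lt_top.ne)
    have l2 : ∫⁻ s, Filter.limsup (fun n => ENNReal.ofReal (F (u n, s))) Filter.atTop ≤
        ∫⁻ s, ENNReal.ofReal (F (x0, s)) := by
      refine lintegral_mono fun s => ?_
      have husc : UpperSemicontinuous fun x => ENNReal.ofReal (F (x, s)) :=
        (ENNReal.continuous_ofReal.comp_upperSemicontinuous h.usc
          (fun a b hab => ENNReal.ofReal_le_ofReal hab)).comp
          (show Continuous fun x : E => (x, s) by fun_prop)
      have := upperSemicontinuousAt_iff_limsup_le.1 (husc x0)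
      refine le_trans ?_ this
      exact Filter.limsup_le_limsup_of_le (f := Filter.map u Filter.atTop)
        (g := nhds x0) (u := fun x => ENNReal.ofReal (F (x, s))) hu
    have l3 : ENNReal.ofReal y ≤
        Filter.limsup (fun n => ∫⁻ s, ENNReal.ofReal (F (u n, s))) Filter.atTop := by
      refine Filter.le_limsup_of_frequently_le (Filter.Frequently.of_forall fun n => ?_)
      rw [← e]
      exact ENNReal.ofReal_le_ofReal (hu' n)
    have l4 := l3.trans (l.trans l2)
    rw [← e] at l4
    exact absurd ((ENNReal.ofReal_lt_ofReal_iff hy0).2 hy) (not_lt.2 l4)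

theorem KLC.marg_pi (k : ℕ) : ∀ {E : Type} [NormedAddCommGroup E] [NormedSpace ℝ E]
    {F : E × (Fin k → ℝ) → ℝ}, KLC F → KLC (fun x => ∫ z, F (x, z)) := by
  induction k with
  | zero =>
    intro E _ _ F h
    have e : ∀ x, ∫ z, F (x, z) = F (x, 0) := by
      intro x
      rw [volume_pi, Measure.pi_of_empty _ 0, integral_dirac]
    simp only [e]
    refine h.comp (fun x => (x, 0)) (by fun_prop) (fun x y t => ?_) Prod.fst continuous_fst
      (fun _ => rfl)
    ext1
    · simp
    · exact Subsingleton.elim _ _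
  | succ k ih =>
    intro E _ _ F h
    have h' : KLC (fun p : (E × (Fin k → ℝ)) × ℝ =>
        F (p.1.1, (Fin.cons p.2 p.1.2 : Fin (k + 1) → ℝ))) := by
      refine h.comp (fun p : (E × (Fin k → ℝ)) × ℝ =>
        (p.1.1, (Fin.cons p.2 p.1.2 : Fin (k + 1) → ℝ))) ?_ ?_
        (fun q => ((q.1, Fin.tail q.2), q.2 0)) ?_ ?_
      · refine Continuous.prodMk (by fun_prop) ?_
        refine continuous_pi fun i => ?_
        refine Fin.cases ?_ (fun j => ?_) i
        · simp only [Fin.cons_zero]; fun_prop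
        · simp only [Fin.cons_succ]; fun_prop
      · intro x y t
        ext i
        · simp
        · refine Fin.cases ?_ (fun j => ?_) i <;> simp
      · refine Continuous.prodMk (Continuous.prodMk (by fun_prop) ?_) (by fun_prop)
        refine continuous_pi fun i => ?_
        simp only [Fin.tail]; fun_prop
      · intro x
        simp
    have h2 := ih h'.marg_one
    have e : (fun x => ∫ w : Fin (k + 1) → ℝ, F (x, w)) = fun x => ∫ z : Fin k → ℝ, ∫ s : ℝ,
        F (x, (Fin.cons s z : Fin (k + 1) → ℝ)) := by
      funext x
      have mp := (volume_preserving_piFinSuccAbove (fun _ : Fin (k + 1) => ℝ) 0).symm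
      have hi : Integrable (fun w => F (x, w)) := (h.slice x).integrable volume
      have hi2 : Integrable (fun q => F (x, (MeasurableEquiv.piFinSuccAbove
          (fun _ : Fin (k + 1) => ℝ) 0).symm q)) (volume.prod volume) :=
        mp.integrable_comp_of_integrable hi
      rw [← mp.integral_comp' (g := fun w => F (x, w)), Measure.volume_eq_prod,
        integral_prod_symm _ hi2]
      refine integral_congr_ae (Filter.Eventually.of_forall fun z => ?_)
      refine integral_congr_ae (Filter.Eventually.of_forall fun s => ?_)
      have hcons : (MeasurableEquiv.piFinSuccAbove (fun _ : Fin (k + 1) => ℝ) 0).symm (s, z) =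
          (Fin.cons s z : Fin (k + 1) → ℝ) := by
        simp [MeasurableEquiv.piFinSuccAbove, Fin.insertNthEquiv]
      simp only [hcons]
    rw [e]
    exact h2

end Marginals

section Truncation

theorem KLC.trunc {n : ℕ} {f : Eucl n → ℝ} (hnonneg : ∀ x, 0 ≤ f x) (hlc : IsLogConcave f)
    (husc : UpperSemicontinuous f) (R : ℝ) :
    KLC ((Metric.closedBall (0 : Eucl n) R).indicator f) where
  nonneg x := Set.indicator_nonneg (fun x _ => hnonneg x) x
  supp := ⟨_, isCompact_closedBall 0 R, fun x hx => Set.indicator_of_notMem hx _⟩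
  lc x y t h0 h1 := by
    have nn : ∀ z, 0 ≤ (Metric.closedBall (0 : Eucl n) R).indicator f z :=
      fun z => Set.indicator_nonneg (fun x _ => hnonneg x) z
    by_cases hx : x ∈ Metric.closedBall (0 : Eucl n) R
    swap
    · rw [Set.indicator_of_notMem hx, Real.zero_rpow h0.ne', zero_mul]
      exact nn _
    by_cases hy : y ∈ Metric.closedBall (0 : Eucl n) R
    swap
    · rw [Set.indicator_of_notMem hy, Real.zero_rpow (by linarith), mul_zero]
      exact nn _
    have hxy : t • x + (1 - t) • y ∈ Metric.closedBall (0 : Eucl n) R :=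
      convex_closedBall (0 : Eucl n) R hx hy h0.le (by linarith) (by ring)
    rw [Set.indicator_of_mem hx, Set.indicator_of_mem hy, Set.indicator_of_mem hxy]
    exact hlc x y t h0 h1
  usc := by
    intro x y hxy
    by_cases hx : x ∈ Metric.closedBall (0 : Eucl n) R
    · rw [Set.indicator_of_mem hx] at hxy
      filter_upwards [husc x y hxy] with z hz
      exact lt_of_le_of_lt (Set.indicator_le_self' (fun z _ => hnonneg z) z) hz
    · have := Metric.isClosed_closedBall.isOpen_compl.mem_nhds hx
      rw [Set.indicator_of_notMem hx] at hxy
      filter_upwards [this] with z hz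
      rw [Set.indicator_of_notMem hz]
      exact hxy

end Truncation

section Moments

variable {n : ℕ} {f : Eucl n → ℝ}

theorem mom_int2 (hnonneg : ∀ x, 0 ≤ f x) (hint : Integrable f)
    (hisotropic : ∀ i j : Fin n, (∫ x, f x * x i * x j) = if i = j then 1 else 0)
    (i j : Fin n) : Integrable (fun x => f x * x i * x j) := by
  have hd : ∀ i : Fin n, Integrable (fun x => f x * x i * x i) := by
    intro i
    by_contra hc
    have := hisotropic i i
    rw [integral_undef hc] at this
    simp at this
  refine ((hd i).add (hd j)).mono' ?_ (Filter.Eventually.of_forall fun x => ?_)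
  · exact (hint.aestronglyMeasurable.mul (by fun_prop)).mul (by fun_prop)
  · have := hnonneg x
    simp only [Pi.add_apply]
    rw [Real.norm_eq_abs, mul_assoc, abs_mul, abs_of_nonneg this]
    have h2 : |x i * x j| ≤ x i * x i + x j * x j := by
      rw [abs_le]; constructor <;> nlinarith [sq_nonneg (x i + x j), sq_nonneg (x i - x j), sq_nonneg (x i), sq_nonneg (x j)]
    nlinarith [mul_le_mul_of_nonneg_left h2 this]

theorem mom_int1 (hnonneg : ∀ x, 0 ≤ f x) (hint : Integrable f)
    (hisotropic : ∀ i j : Fin n, (∫ x, f x * x i * x j) = if i = j then 1 else 0)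
    (i : Fin n) : Integrable (fun x => f x * x i) := by
  refine (hint.add (mom_int2 hnonneg hint hisotropic i i)).mono' ?_
    (Filter.Eventually.of_forall fun x => ?_)
  · exact hint.aestronglyMeasurable.mul (by fun_prop)
  · have := hnonneg x
    simp only [Pi.add_apply]
    rw [Real.norm_eq_abs, abs_mul, abs_of_nonneg this]
    have h2 : |x i| ≤ 1 + x i * x i := by
      rw [abs_le]; constructor <;> nlinarith [sq_nonneg (x i + 1), sq_nonneg (x i - 1)]
    nlinarith [mul_le_mul_of_nonneg_left h2 this]

theorem eucl_inner_sum (v x : Eucl n) : inner ℝ v x = ∑ a, v a * x a := by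
  simp [PiLp.inner_apply, mul_comm]

theorem mom1 (hnonneg : ∀ x, 0 ≤ f x) (hint : Integrable f)
    (hcentered : ∀ i : Fin n, (∫ x, f x * x i) = 0)
    (hisotropic : ∀ i j : Fin n, (∫ x, f x * x i * x j) = if i = j then 1 else 0)
    (v : Eucl n) : Integrable (fun x => f x * inner ℝ v x) ∧ ∫ x, f x * inner ℝ v x = 0 := by
  have e : (fun x => f x * inner ℝ v x) = fun x => ∑ a, v a * (f x * x a) := by
    funext x
    rw [eucl_inner_sum, Finset.mul_sum]
    exact Finset.sum_congr rfl fun a _ => by ring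
  have hi : ∀ a ∈ Finset.univ, Integrable (fun x : Eucl n => v a * (f x * x a)) :=
    fun a _ => (mom_int1 hnonneg hint hisotropic a).const_mul _
  rw [e]
  refine ⟨integrable_finsetSum _ hi, ?_⟩
  rw [integral_finsetSum _ hi]
  simp [integral_const_mul, hcentered]

theorem mom2 (hnonneg : ∀ x, 0 ≤ f x) (hint : Integrable f)
    (hisotropic : ∀ i j : Fin n, (∫ x, f x * x i * x j) = if i = j then 1 else 0)
    (v w : Eucl n) : Integrable (fun x => f x * (inner ℝ v x * inner ℝ w x)) ∧
      ∫ x, f x * (inner ℝ v x * inner ℝ w x) = inner ℝ v w := by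
  have e : (fun x => f x * (inner ℝ v x * inner ℝ w x)) =
      fun x => ∑ a, ∑ b, v a * w b * (f x * x a * x b) := by
    funext x
    rw [eucl_inner_sum, eucl_inner_sum, Finset.sum_mul_sum, Finset.mul_sum]
    refine Finset.sum_congr rfl fun a _ => ?_
    rw [Finset.mul_sum]
    exact Finset.sum_congr rfl fun b _ => by ring
  have hi : ∀ a b, Integrable (fun x : Eucl n => v a * w b * (f x * x a * x b)) :=
    fun a b => (mom_int2 hnonneg hint hisotropic a b).const_mul _
  have hi2 : ∀ a ∈ Finset.univ,
      Integrable (fun x : Eucl n => ∑ b, v a * w b * (f x * x a * x b)) :=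
    fun a _ => integrable_finsetSum _ fun b _ => hi a b
  rw [e]
  refine ⟨integrable_finsetSum _ hi2, ?_⟩
  rw [integral_finsetSum _ hi2, eucl_inner_sum]
  refine Finset.sum_congr rfl fun a _ => ?_
  rw [integral_finsetSum _ fun b _ => hi a b]
  simp [integral_const_mul, hisotropic]

end Moments

section Geometry

theorem exists_split {n k : ℕ} (hkn : k < n) (H : Submodule ℝ (Eucl n))
    (hH : Module.finrank ℝ H = k) :
    ∃ (P : (Eucl (n - k) × (Fin k → ℝ)) ≃L[ℝ] Eucl n) (b : Fin (n - k) → Eucl n)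
      (φ : (Fin k → ℝ) ≃L[ℝ] H),
      MeasurePreserving P (volume.prod volume) volume ∧
      MeasurePreserving φ volume volume ∧
      (∀ z, P (0, z) = φ z) ∧
      (∀ i y z, inner ℝ (b i) (P (y, z)) = y i) ∧
      (∀ i j, inner ℝ (b i) (b j) = if i = j then (1 : ℝ) else 0) := by
  have hd : Module.finrank ℝ Hᗮ = n - k := by
    have := H.finrank_add_finrank_orthogonal
    rw [finrank_euclideanSpace_fin] at this
    omega
  let ψ : Eucl (n - k) ≃ₗᵢ[ℝ] Hᗮ :=
    ((stdOrthonormalBasis ℝ Hᗮ).reindex (finCongr hd)).repr.symm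
  let φ0 : Eucl k ≃ₗᵢ[ℝ] H := ((stdOrthonormalBasis ℝ H).reindex (finCongr hH)).repr.symm
  let φ : (Fin k → ℝ) ≃L[ℝ] H :=
    (PiLp.continuousLinearEquiv 2 ℝ (fun _ : Fin k => ℝ)).symm.trans
      φ0.toContinuousLinearEquiv
  have hφ : MeasurePreserving φ volume volume :=
    φ0.measurePreserving.comp (PiLp.volume_preserving_toLp (Fin k))
  let P : (Eucl (n - k) × (Fin k → ℝ)) ≃L[ℝ] Eucl n :=
    (ContinuousLinearEquiv.prodComm ℝ (Eucl (n - k)) (Fin k → ℝ)).trans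
      ((φ.prodCongr ψ.toContinuousLinearEquiv).trans
        ((WithLp.prodContinuousLinearEquiv 2 ℝ H Hᗮ).symm.trans
          H.orthogonalDecomposition.symm.toContinuousLinearEquiv))
  have hP : ∀ y z, P (y, z) = (φ z : Eucl n) + (ψ y : Eucl n) := fun y z => rfl
  refine ⟨P, fun i => (ψ (EuclideanSpace.single i 1) : Eucl n), φ, ?_, hφ, ?_, ?_, ?_⟩
  · have h1 : MeasurePreserving (Prod.map φ ψ) (volume.prod volume) (volume.prod volume) :=
      hφ.prod ψ.measurePreserving
    exact (H.orthogonalDecomposition.symm.measurePreserving.comp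
      (WithLp.volume_preserving_toLp H Hᗮ)).comp (h1.comp Measure.measurePreserving_swap)
  · intro z
    simp [hP]
  · intro i y z
    rw [hP, inner_add_right, Submodule.inner_left_of_mem_orthogonal (φ z).2 (ψ _).2, zero_add,
      ← Submodule.coe_inner, ψ.inner_map_map, eucl_inner_sum]
    simp [Pi.single_apply]
  · intro i j
    rw [← Submodule.coe_inner, ψ.inner_map_map, eucl_inner_sum]
    simp [eq_comm]

end Geometry

section Main

theorem marg_moment {n k : ℕ} {f : Eucl n → ℝ}
    (P : (Eucl (n - k) × (Fin k → ℝ)) ≃L[ℝ] Eucl n)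
    (hP : MeasurePreserving P (volume.prod volume) volume) (R : ℝ)
    (q : Eucl (n - k) → ℝ) (p : Eucl n → ℝ) (hpq : ∀ y z, p (P (y, z)) = q y)
    (hi : Integrable (fun x => f x * p x)) :
    ∫ y, (∫ z, (Metric.closedBall (0 : Eucl n) R).indicator f (P (y, z))) * q y =
      ∫ x in Metric.closedBall (0 : Eucl n) R, f x * p x := by
  have hm : MeasurableSet (Metric.closedBall (0 : Eucl n) R) := measurableSet_closedBall
  have hi' := hi.indicator hm
  have hi2 : Integrable (fun w => (Metric.closedBall (0 : Eucl n) R).indicator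
      (fun x => f x * p x) (P w)) (volume.prod volume) := hP.integrable_comp_of_integrable hi'
  rw [← integral_indicator hm,
    ← hP.integral_comp P.toHomeomorph.measurableEmbedding, integral_prod _ hi2]
  refine integral_congr_ae (Filter.Eventually.of_forall fun y => ?_)
  simp only
  rw [← integral_mul_const]
  refine integral_congr_ae (Filter.Eventually.of_forall fun z => ?_)
  simp only
  by_cases h : P (y, z) ∈ Metric.closedBall (0 : Eucl n) R
  · rw [Set.indicator_of_mem h, Set.indicator_of_mem h, hpq]
  · rw [Set.indicator_of_notMem h, Set.indicator_of_notMem h, zero_mul]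

theorem trunc_tendsto {n : ℕ} {h : Eucl n → ℝ} (hi : Integrable h) :
    Filter.Tendsto (fun N : ℕ => ∫ x in Metric.closedBall (0 : Eucl n) (N : ℝ), h x)
      Filter.atTop (nhds (∫ x, h x)) :=
  (aecover_closedBall tendsto_natCast_atTop_atTop).integral_tendsto_of_countably_generated hi

end Main

end Helpers

/-- **Lemma 5.3, upper bound**: if `L_g ≤ M` for every `g ∈ Q₀^{n−k}`, then every
log-concave upper semicontinuous probability density `f` on `ℝⁿ` in isotropic
position satisfies `∫_H f dλ_H ≤ M^{n−k}` for every `k`-dimensional subspace `H`. -/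
theorem section_integral_upper_bound (n k : ℕ) (hk1 : 1 ≤ k) (hkn : k < n)
    (M : ℝ) (hM : 0 < M)
    (hbound : ∀ g : Eucl (n - k) → ℝ, MemQ0 g → isoConst g ≤ M)
    (f : Eucl n → ℝ) (hnonneg : ∀ x, 0 ≤ f x) (hlc : IsLogConcave f)
    (husc : UpperSemicontinuous f) (hint : Integrable f)
    (hprob : (∫ x, f x) = 1)
    (hcentered : ∀ i : Fin n, (∫ x, f x * x i) = 0)
    (hisotropic : ∀ i j : Fin n, (∫ x, f x * x i * x j) = if i = j then 1 else 0) :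
    ∀ H : Submodule ℝ (Eucl n), Module.finrank ℝ H = k →
      sectL1 f H ≤ M ^ (n - k) := by
  intro H hH
  by_cases hHi : Integrable (fun y : H => f (y : Eucl n))
  swap
  · rw [sectL1, integral_undef hHi]
    positivity
  obtain ⟨P, b, φ, hP, hφ, hPφ, hPb, hb⟩ := exists_split hkn H hH
  have hd : 0 < n - k := by omega
  let g : ℕ → Eucl (n - k) → ℝ := fun N y =>
    ∫ z, (Metric.closedBall (0 : Eucl n) (N : ℝ)).indicator f (P (y, z))
  have hg : ∀ N, KLC (g N) := by
    intro N
    refine KLC.marg_pi k (F := fun p =>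
      (Metric.closedBall (0 : Eucl n) (N : ℝ)).indicator f (P p)) ?_
    exact (KLC.trunc hnonneg hlc husc N).comp P P.continuous (fun x y t => by simp) P.symm
      P.symm.continuous (fun x => by simp)
  -- limits of the moments
  have t0 : Filter.Tendsto (fun N => ∫ y, g N y) Filter.atTop (nhds 1) := by
    have h1 : Integrable (fun x => f x * (1 : ℝ)) := by simpa using hint
    have := trunc_tendsto h1
    simp only [mul_one, hprob] at this
    refine this.congr fun N => ?_
    have := marg_moment (f := f) P hP N (fun _ => 1) (fun _ => 1) (fun _ _ => rfl) h1
    simp only [mul_one] at this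
    exact this.symm
  have t1 : ∀ i, Filter.Tendsto (fun N => ∫ y, g N y * y i) Filter.atTop (nhds 0) := by
    intro i
    obtain ⟨h1, h2⟩ := mom1 hnonneg hint hcentered hisotropic (b i)
    have := trunc_tendsto h1
    rw [h2] at this
    refine this.congr fun N => ?_
    exact (marg_moment (f := f) P hP N (fun y => y i) (fun x => inner ℝ (b i) x)
      (fun y z => hPb i y z) h1).symm
  have t2 : ∀ i j, Filter.Tendsto (fun N => ∫ y, g N y * y i * y j) Filter.atTop
      (nhds (if i = j then 1 else 0)) := by
    intro i j
    obtain ⟨h1, h2⟩ := mom2 hnonneg hint hisotropic (b i) (b j)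
    have := trunc_tendsto h1
    rw [h2, hb] at this
    refine this.congr fun N => ?_
    have := (marg_moment (f := f) P hP N (fun y => y i * y j)
      (fun x => inner ℝ (b i) x * inner ℝ (b j) x)
      (fun y z => by rw [hPb, hPb]) h1).symm
    rw [this]
    refine integral_congr_ae (Filter.Eventually.of_forall fun y => ?_)
    simp only [g, mul_assoc]
  have tcov : Filter.Tendsto (fun N => covMatrix (g N)) Filter.atTop (nhds 1) := by
    refine tendsto_pi_nhds.2 fun i => tendsto_pi_nhds.2 fun j => ?_
    have := ((t2 i j).div t0 one_ne_zero).sub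
      (((t1 i).div t0 one_ne_zero).mul ((t1 j).div t0 one_ne_zero))
    have e : (1 : Matrix (Fin (n - k)) (Fin (n - k)) ℝ) i j =
        (if i = j then 1 else 0) / 1 - 0 / 1 * (0 / 1) := by
      simp [Matrix.one_apply]
    rw [e]
    exact this
  have tdet : Filter.Tendsto (fun N => (covMatrix (g N)).det) Filter.atTop (nhds 1) := by
    have hc : Continuous fun A : Matrix (Fin (n - k)) (Fin (n - k)) ℝ => A.det :=
      continuous_id.matrix_det
    have := (hc.tendsto 1).comp tcov
    rwa [Matrix.det_one] at this
  have tsec : Filter.Tendsto (fun N => g N 0) Filter.atTop (nhds (sectL1 f H)) := by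
    have : Filter.Tendsto (fun N : ℕ => ∫ y in Metric.closedBall (0 : H) (N : ℝ), f (y : Eucl n))
        Filter.atTop (nhds (∫ y : H, f (y : Eucl n))) :=
      (aecover_closedBall tendsto_natCast_atTop_atTop).integral_tendsto_of_countably_generated hHi
    refine this.congr fun N => ?_
    simp only [g, hPφ]
    rw [hφ.integral_comp φ.toHomeomorph.measurableEmbedding
      (fun y : H => (Metric.closedBall (0 : Eucl n) (N : ℝ)).indicator f (y : Eucl n)),
      ← integral_indicator measurableSet_closedBall]
    refine integral_congr_ae (Filter.Eventually.of_forall fun y => ?_)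
    have hmem : y ∈ Metric.closedBall (0 : H) (N : ℝ) ↔
        (y : Eucl n) ∈ Metric.closedBall (0 : Eucl n) (N : ℝ) := by simp
    simp only
    by_cases hy : y ∈ Metric.closedBall (0 : H) (N : ℝ)
    · rw [Set.indicator_of_mem hy, Set.indicator_of_mem (hmem.1 hy)]
    · rw [Set.indicator_of_notMem hy, Set.indicator_of_notMem (fun h => hy (hmem.2 h))]
  have d0 : (0 : ℝ) ≤ 1 / ((n - k : ℕ) : ℝ) := by positivity
  have d1 : (0 : ℝ) ≤ 1 / (2 * ((n - k : ℕ) : ℝ)) := by positivity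
  have tall := ((tsec.div t0 one_ne_zero).rpow_const (p := 1 / ((n - k : ℕ) : ℝ)) (Or.inr d0)).mul
    (tdet.rpow_const (p := 1 / (2 * ((n - k : ℕ) : ℝ))) (Or.inr d1))
  have hs0 : 0 ≤ sectL1 f H := integral_nonneg fun y => hnonneg _
  have lim : (sectL1 f H / 1) ^ (1 / ((n - k : ℕ) : ℝ)) *
      (1 : ℝ) ^ (1 / (2 * ((n - k : ℕ) : ℝ))) ≤ M := by
    refine le_of_tendsto tall ?_
    filter_upwards [t0.eventually (lt_mem_nhds one_pos), tdet.eventually (lt_mem_nhds one_pos)]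
      with N hN hdet
    refine le_trans ?_ (hbound (g N) ⟨(hg N).nonneg, (hg N).lc, (hg N).usc,
      (hg N).integrable volume, hN⟩)
    unfold isoConst supNorm
    obtain ⟨C, hC0, hC⟩ := (hg N).bdd
    have hle : g N 0 ≤ ⨆ x, g N x := le_ciSup ⟨C, by rintro _ ⟨x, rfl⟩; exact hC x⟩ 0
    have h0 := (hg N).nonneg 0
    exact mul_le_mul_of_nonneg_right
      (Real.rpow_le_rpow (div_nonneg h0 hN.le) (div_le_div_of_nonneg_right hle hN.le) d0)
      (Real.rpow_nonneg hdet.le _)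
  rw [div_one, Real.one_rpow, mul_one] at lim
  calc sectL1 f H = (sectL1 f H ^ (1 / ((n - k : ℕ) : ℝ))) ^ (n - k) := by
        rw [one_div, Real.rpow_inv_natCast_pow hs0 hd.ne']
    _ ≤ M ^ (n - k) := pow_le_pow_left₀ (Real.rpow_nonneg hs0 _) lim _
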